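/- (Maehara's lemma for G) In the calculus G, every partition Γ₁;Γ₂⇒Δ₁;Δ₂ of a derivable sequent Γ⇒Δ has a split-interpolant: there exists a formula C such that Γ₁⇒Δ₁,C and C,Γ₂⇒Δ₂ are derivable in G and L(C) ⊆ L(Γ₁,Δ₁) ∩ L(Γ₂,Δ₂). -/

import Mathlib

/-- Terms: variables or individual constants (no function symbols). -/
inductive Tm where
  | var : ℕ → Tm
  | const : ℕ → Tm
deriving DecidableEq

/-- First-order formulas over a language with denumerably many predicates,
a logical identity predicate, ⊥, ⊤, ∧, ∨, →, ∀, ∃. -/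
inductive Fm where
  | rel : ℕ → List Tm → Fm
  | eq : Tm → Tm → Fm
  | bot : Fm
  | top : Fm
  | and : Fm → Fm → Fm
  | or : Fm → Fm → Fm
  | imp : Fm → Fm → Fm
  | all : ℕ → Fm → Fm
  | ex : ℕ → Fm → Fm
deriving DecidableEq

def Fm.isAtom : Fm → Prop
  | .rel _ _ => True
  | .eq _ _ => True
  | .bot => True
  | .top => True
  | _ => False

/-- Ter(A): the free variables and individual constants of A, as terms. -/
def Fm.ter : Fm → Finset Tm
  | .rel _ ts => ts.toFinset
  | .eq a b => {a, b}
  | .bot => ∅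
  | .top => ∅
  | .and A B => A.ter ∪ B.ter
  | .or A B => A.ter ∪ B.ter
  | .imp A B => A.ter ∪ B.ter
  | .all x A => A.ter.erase (Tm.var x)
  | .ex x A => A.ter.erase (Tm.var x)

/-- Rel(A): the non-logical predicate symbols of A (identity, ⊥, ⊤ are logical). -/
def Fm.rels : Fm → Finset ℕ
  | .rel r _ => {r}
  | .eq _ _ => ∅
  | .bot => ∅
  | .top => ∅
  | .and A B => A.rels ∪ B.rels
  | .or A B => A.rels ∪ B.rels
  | .imp A B => A.rels ∪ B.rels
  | .all _ A => A.rels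
  | .ex _ A => A.rels

def Tm.consts : Tm → Finset ℕ
  | .var _ => ∅
  | .const c => {c}

/-- The individual constants occurring in A. -/
def Fm.consts : Fm → Finset ℕ
  | .rel _ ts => ts.foldr (fun t s => t.consts ∪ s) ∅
  | .eq a b => a.consts ∪ b.consts
  | .bot => ∅
  | .top => ∅
  | .and A B => A.consts ∪ B.consts
  | .or A B => A.consts ∪ B.consts
  | .imp A B => A.consts ∪ B.consts
  | .all _ A => A.consts
  | .ex _ A => A.consts

/-- L(A) = Ter(A) ∪ Rel(A). -/
def Fm.lang (A : Fm) : Finset (Tm ⊕ ℕ) :=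
  A.ter.image Sum.inl ∪ A.rels.image Sum.inr

/-- Ter of a multiset of formulas. -/
def terM (Γ : Multiset Fm) : Finset Tm := (Γ.map Fm.ter).sup

/-- L of a multiset of formulas. -/
def langM (Γ : Multiset Fm) : Finset (Tm ⊕ ℕ) := (Γ.map Fm.lang).sup

/-- s[t/u]: substitute the term t for the term u (a variable or a constant) in s. -/
def Tm.subst (s u t : Tm) : Tm := if s = u then t else s

/-- A[t/u]: substitute the term t for the term u in A (bound occurrences
of a variable u are not replaced). -/
def Fm.subst : Fm → Tm → Tm → Fm
  | .rel r ts, u, t => .rel r (ts.map (fun s => s.subst u t))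
  | .eq a b, u, t => .eq (a.subst u t) (b.subst u t)
  | .bot, _, _ => .bot
  | .top, _, _ => .top
  | .and A B, u, t => .and (A.subst u t) (B.subst u t)
  | .or A B, u, t => .or (A.subst u t) (B.subst u t)
  | .imp A B, u, t => .imp (A.subst u t) (B.subst u t)
  | .all x A, u, t => if u = Tm.var x then .all x A else .all x (A.subst u t)
  | .ex x A, u, t => if u = Tm.var x then .ex x A else .ex x (A.subst u t)

/-- t is free for u in A (no free occurrence of u is in the scope of a
quantifier binding the variable t, if t is a variable). -/
def Fm.freeFor (t u : Tm) : Fm → Prop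
  | .and A B => A.freeFor t u ∧ B.freeFor t u
  | .or A B => A.freeFor t u ∧ B.freeFor t u
  | .imp A B => A.freeFor t u ∧ B.freeFor t u
  | .all x A => u ∉ (Fm.all x A).ter ∨ (t ≠ Tm.var x ∧ A.freeFor t u)
  | .ex x A => u ∉ (Fm.ex x A).ter ∨ (t ≠ Tm.var x ∧ A.freeFor t u)
  | _ => True

/-- Simultaneous substitution of terms for variables (used on atoms). -/
def Tm.applyσ (σ : ℕ → Tm) : Tm → Tm
  | .var x => σ x
  | .const c => .const c

def Fm.applyσ (σ : ℕ → Tm) : Fm → Fm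
  | .rel r ts => .rel r (ts.map (Tm.applyσ σ))
  | .eq a b => .eq (a.applyσ σ) (b.applyσ σ)
  | .bot => .bot
  | .top => .top
  | .and A B => .and (A.applyσ σ) (B.applyσ σ)
  | .or A B => .or (A.applyσ σ) (B.applyσ σ)
  | .imp A B => .imp (A.applyσ σ) (B.applyσ σ)
  | .all x A => .all x (A.applyσ σ)
  | .ex x A => .ex x (A.applyσ σ)

/-- A geometric rule, given by its principal atoms P₁,…,Pₙ (with free
variables x̄) and, for each of its m ≥ 1 premises, an atom Qᵢ together with
its eigenvariable yᵢ. It corresponds to the geometric axiom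
∀x̄(P₁∧…∧Pₙ → ∃y₁Q₁ ∨ … ∨ ∃yₘQₘ). -/
structure GeomRule where
  Ps : List Fm
  QYs : List (Fm × ℕ)
  QYs_ne : QYs ≠ []
  atomP : ∀ P ∈ Ps, P.isAtom
  atomQ : ∀ q ∈ QYs, q.1.isAtom

/-- Rel of a list of formulas. -/
def relsL (L : List Fm) : Finset ℕ := L.foldr (fun A s => A.rels ∪ s) ∅

/-- A singular geometric rule: no individual constants occur in it, and (⋆):
at most one non-logical predicate occurs among the Qᵢ's and Pⱼ's, and every
non-logical predicate of the Qᵢ's occurs among the Pⱼ's. -/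
def GeomRule.Singular (R : GeomRule) : Prop :=
  (∀ P ∈ R.Ps, P.consts = ∅) ∧ (∀ q ∈ R.QYs, q.1.consts = ∅) ∧
  (relsL R.Ps ∪ relsL (R.QYs.map Prod.fst)).card ≤ 1 ∧
  relsL (R.QYs.map Prod.fst) ⊆ relsL R.Ps

/-- The instantiated principal atoms P₁[σ],…,Pₙ[σ] of a geometric rule. -/
def GeomRule.inst (R : GeomRule) (σ : ℕ → Tm) : Multiset Fm :=
  ((R.Ps.map (Fm.applyσ σ) : List Fm) : Multiset Fm)

/-- `DerG Rules n Γ Δ`: the sequent Γ⇒Δ has a derivation of height at most n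
in the calculus G3c extended with the geometric rules in `Rules`
(the plain calculus G is `DerG ∅`). -/
inductive DerG (Rules : Set GeomRule) : ℕ → Multiset Fm → Multiset Fm → Prop where
  | ax {n : ℕ} {P : Fm} {Γ Δ : Multiset Fm} (h : P.isAtom) :
      DerG Rules n (P ::ₘ Γ) (P ::ₘ Δ)
  | botL {n : ℕ} {Γ Δ : Multiset Fm} : DerG Rules n (Fm.bot ::ₘ Γ) Δ
  | topR {n : ℕ} {Γ Δ : Multiset Fm} : DerG Rules n Γ (Fm.top ::ₘ Δ)
  | andL {n : ℕ} {A B : Fm} {Γ Δ : Multiset Fm} :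
      DerG Rules n (A ::ₘ B ::ₘ Γ) Δ → DerG Rules (n + 1) (Fm.and A B ::ₘ Γ) Δ
  | andR {n : ℕ} {A B : Fm} {Γ Δ : Multiset Fm} :
      DerG Rules n Γ (A ::ₘ Δ) → DerG Rules n Γ (B ::ₘ Δ) →
      DerG Rules (n + 1) Γ (Fm.and A B ::ₘ Δ)
  | orL {n : ℕ} {A B : Fm} {Γ Δ : Multiset Fm} :
      DerG Rules n (A ::ₘ Γ) Δ → DerG Rules n (B ::ₘ Γ) Δ →
      DerG Rules (n + 1) (Fm.or A B ::ₘ Γ) Δ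
  | orR {n : ℕ} {A B : Fm} {Γ Δ : Multiset Fm} :
      DerG Rules n Γ (A ::ₘ B ::ₘ Δ) → DerG Rules (n + 1) Γ (Fm.or A B ::ₘ Δ)
  | impL {n : ℕ} {A B : Fm} {Γ Δ : Multiset Fm} :
      DerG Rules n Γ (A ::ₘ Δ) → DerG Rules n (B ::ₘ Γ) Δ →
      DerG Rules (n + 1) (Fm.imp A B ::ₘ Γ) Δ
  | impR {n : ℕ} {A B : Fm} {Γ Δ : Multiset Fm} :
      DerG Rules n (A ::ₘ Γ) (B ::ₘ Δ) → DerG Rules (n + 1) Γ (Fm.imp A B ::ₘ Δ)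
  | allL {n : ℕ} {x : ℕ} {A : Fm} {t : Tm} {Γ Δ : Multiset Fm}
      (hfree : A.freeFor t (Tm.var x)) :
      DerG Rules n (A.subst (Tm.var x) t ::ₘ Fm.all x A ::ₘ Γ) Δ →
      DerG Rules (n + 1) (Fm.all x A ::ₘ Γ) Δ
  | allR {n : ℕ} {x y : ℕ} {A : Fm} {Γ Δ : Multiset Fm}
      (hfree : A.freeFor (Tm.var y) (Tm.var x))
      (hy : Tm.var y ∉ terM Γ ∪ terM Δ ∪ (Fm.all x A).ter) :
      DerG Rules n Γ (A.subst (Tm.var x) (Tm.var y) ::ₘ Δ) →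
      DerG Rules (n + 1) Γ (Fm.all x A ::ₘ Δ)
  | exL {n : ℕ} {x y : ℕ} {A : Fm} {Γ Δ : Multiset Fm}
      (hfree : A.freeFor (Tm.var y) (Tm.var x))
      (hy : Tm.var y ∉ terM Γ ∪ terM Δ ∪ (Fm.ex x A).ter) :
      DerG Rules n (A.subst (Tm.var x) (Tm.var y) ::ₘ Γ) Δ →
      DerG Rules (n + 1) (Fm.ex x A ::ₘ Γ) Δ
  | exR {n : ℕ} {x : ℕ} {A : Fm} {t : Tm} {Γ Δ : Multiset Fm}
      (hfree : A.freeFor t (Tm.var x)) :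
      DerG Rules n Γ (Fm.ex x A ::ₘ A.subst (Tm.var x) t ::ₘ Δ) →
      DerG Rules (n + 1) Γ (Fm.ex x A ::ₘ Δ)
  | geom {n : ℕ} {R : GeomRule} {σ : ℕ → Tm} {Γ Δ : Multiset Fm} (hR : R ∈ Rules)
      (hfresh : ∀ q ∈ R.QYs, ∃ z : ℕ, σ q.2 = Tm.var z ∧
          Tm.var z ∉ terM (R.inst σ + Γ) ∪ terM Δ)
      (hprem : ∀ q ∈ R.QYs, DerG Rules n (Fm.applyσ σ q.1 ::ₘ (R.inst σ + Γ)) Δ) :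
      DerG Rules (n + 1) (R.inst σ + Γ) Δ

/-- Γ⇒Δ is derivable in G + Rules. -/
def Derivable (Rules : Set GeomRule) (Γ Δ : Multiset Fm) : Prop :=
  ∃ n, DerG Rules n Γ Δ

/-- C is a split-interpolant of the partition Γ₁;Γ₂⇒Δ₁;Δ₂ in G + Rules. -/
def SplitInterpolant (Rules : Set GeomRule) (Γ₁ Γ₂ Δ₁ Δ₂ : Multiset Fm) (C : Fm) : Prop :=
  Derivable Rules Γ₁ (C ::ₘ Δ₁) ∧ Derivable Rules (C ::ₘ Γ₂) Δ₂ ∧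
  C.lang ⊆ langM (Γ₁ + Δ₁) ∩ langM (Γ₂ + Δ₂)
/-- Disjunction C₁ ∨ … ∨ Cₘ of a list of formulas. -/
def disj : List Fm → Fm
  | [] => Fm.bot
  | [C] => C
  | C :: L => Fm.or C (disj L)

/-- Conjunction C₁ ∧ … ∧ Cₘ of a list of formulas. -/
def conj : List Fm → Fm
  | [] => Fm.top
  | [C] => C
  | C :: L => Fm.and C (conj L)

/-- A[z̄/t̄]: successively substitute the variable zᵢ for the term tᵢ. -/
def Fm.substPairs : Fm → List (Tm × ℕ) → Fm
  | A, [] => A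
  | A, (t, z) :: L => (A.subst t (Tm.var z)).substPairs L

/-- ∀z̄ A. -/
def foralls (zs : List ℕ) (A : Fm) : Fm := zs.foldr Fm.all A

/-- ∃z̄ A. -/
def exs (zs : List ℕ) (A : Fm) : Fm := zs.foldr Fm.ex A

/-!
By induction on the derivation, an interpolant of the conclusion of each rule is built from
interpolants of its premises. Replacing `C` by `C → ⊥` exchanges the two components of a partition,
so the principal formula may always be assumed to lie in the first one. One-premise propositional
rules keep the interpolant and two-premise rules take the disjunction. An eigenvariable cannot occur
in the interpolant, because it is foreign to the second component, so R∀ and L∃ keep it as well.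
In L∀ and R∃ the instantiating term `t` may be foreign to the first component of the conclusion;
then `t` is generalized in the interpolant, which becomes `∀z C[z/t]` with `z` fresh. This uses
closure of derivability under weakening and under substitution for terms, which are proved together
because both require renaming eigenvariables.
-/

/-! ### Simultaneous substitution -/

/-- The substitution `σ` as it acts in the scope of a quantifier binding the variable `x`. -/
def underBinder (x : ℕ) (σ : Tm → Tm) (s : Tm) : Tm :=
  if s = Tm.var x then s else σ s

theorem underBinder_id (x : ℕ) : underBinder x id = id :=
  funext fun _ => ite_self _

theorem underBinder_congr {x : ℕ} {T : Finset Tm} {σ τ : Tm → Tm}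
    (h : ∀ s ∈ T.erase (Tm.var x), σ s = τ s) :
    ∀ s ∈ T, underBinder x σ s = underBinder x τ s := by
  intro s hs
  simp only [underBinder]
  grind

theorem underBinder_comp {x : ℕ} {T : Finset Tm} {σ τ : Tm → Tm}
    (h : ∀ s ∈ T.erase (Tm.var x), τ s ≠ Tm.var x) :
    ∀ s ∈ T, (underBinder x σ ∘ underBinder x τ) s = underBinder x (σ ∘ τ) s := by
  intro s hs
  simp only [Function.comp, underBinder]
  grind

theorem underBinder_subst_of_ne {x : ℕ} {u : Tm} (h : u ≠ Tm.var x) (t : Tm) :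
    underBinder x (Tm.subst · u t) = (Tm.subst · u t) := by
  funext s
  simp only [underBinder, Tm.subst]
  grind

theorem underBinder_subst_self (x : ℕ) (t : Tm) :
    underBinder x (Tm.subst · (Tm.var x) t) = id := by
  funext s
  simp only [underBinder, Tm.subst, id]
  grind

namespace Fm

/-- Simultaneous substitution of `σ s` for the free occurrences of every term `s`, constants
included. Bound variables are not renamed, so the result is meaningful only under `CaptureFree`. -/
def simSubst : Fm → (Tm → Tm) → Fm
  | .rel r ts, σ => .rel r (ts.map σ)
  | .eq a b, σ => .eq (σ a) (σ b)
  | .bot, _ => .bot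
  | .top, _ => .top
  | .and A B, σ => .and (A.simSubst σ) (B.simSubst σ)
  | .or A B, σ => .or (A.simSubst σ) (B.simSubst σ)
  | .imp A B, σ => .imp (A.simSubst σ) (B.simSubst σ)
  | .all x A, σ => .all x (A.simSubst (underBinder x σ))
  | .ex x A, σ => .ex x (A.simSubst (underBinder x σ))

/-- No variable introduced by the simultaneous substitution `σ` becomes bound in the formula:
the analogue of `freeFor` for `simSubst`. -/
def CaptureFree : Fm → (Tm → Tm) → Prop
  | .and A B, σ => A.CaptureFree σ ∧ B.CaptureFree σ
  | .or A B, σ => A.CaptureFree σ ∧ B.CaptureFree σ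
  | .imp A B, σ => A.CaptureFree σ ∧ B.CaptureFree σ
  | .all x A, σ => (∀ s ∈ A.ter.erase (Tm.var x), σ s ≠ Tm.var x) ∧
      A.CaptureFree (underBinder x σ)
  | .ex x A, σ => (∀ s ∈ A.ter.erase (Tm.var x), σ s ≠ Tm.var x) ∧
      A.CaptureFree (underBinder x σ)
  | _, _ => True

/-- The variables bound by some quantifier of the formula, as terms. -/
def boundVars : Fm → Finset Tm
  | .and A B => A.boundVars ∪ B.boundVars
  | .or A B => A.boundVars ∪ B.boundVars
  | .imp A B => A.boundVars ∪ B.boundVars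
  | .all x A => insert (Tm.var x) A.boundVars
  | .ex x A => insert (Tm.var x) A.boundVars
  | _ => ∅

theorem isAtom.simSubst {P : Fm} (h : P.isAtom) (σ : Tm → Tm) : (P.simSubst σ).isAtom := by
  cases P <;> exact h

theorem simSubst_congr {A : Fm} {σ τ : Tm → Tm} (h : ∀ s ∈ A.ter, σ s = τ s) :
    A.simSubst σ = A.simSubst τ := by
  induction A generalizing σ τ with
  | rel r ts => simpa [simSubst, ter] using h
  | eq a b => simpa [simSubst, ter] using h
  | bot | top => rfl
  | and A B ihA ihB | or A B ihA ihB | imp A B ihA ihB =>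
    simp only [simSubst, ihA fun s hs => h s (Finset.mem_union_left _ hs),
      ihB fun s hs => h s (Finset.mem_union_right _ hs)]
  | all x A ih | ex x A ih => simp only [simSubst, ih (underBinder_congr h)]

theorem simSubst_id (A : Fm) : A.simSubst id = A := by
  induction A <;> simp_all [simSubst, underBinder_id]

theorem simSubst_eq_self {A : Fm} {σ : Tm → Tm} (h : ∀ s ∈ A.ter, σ s = s) :
    A.simSubst σ = A :=
  (simSubst_congr h).trans A.simSubst_id

theorem subst_eq_simSubst (A : Fm) (u t : Tm) :
    A.subst u t = A.simSubst (Tm.subst · u t) := by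
  induction A with
  | rel | eq | bot | top => rfl
  | and A B ihA ihB | or A B ihA ihB | imp A B ihA ihB => simp only [subst, simSubst, ihA, ihB]
  | all x A ih | ex x A ih =>
    simp only [subst, simSubst]
    split_ifs with hu
    · rw [hu, underBinder_subst_self, simSubst_id]
    · rw [underBinder_subst_of_ne hu, ih]

theorem subst_self (A : Fm) (u : Tm) : A.subst u u = A := by
  rw [subst_eq_simSubst]
  refine simSubst_eq_self fun s _ => ?_
  simp only [Tm.subst]
  grind

theorem ter_simSubst_subset (A : Fm) (σ : Tm → Tm) : (A.simSubst σ).ter ⊆ A.ter.image σ := by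
  induction A generalizing σ with
  | rel r ts => intro s hs; simpa [simSubst, ter] using hs
  | eq a b => intro s hs; simpa [simSubst, ter, eq_comm] using hs
  | bot | top => simp [simSubst, ter]
  | and A B ihA ihB | or A B ihA ihB | imp A B ihA ihB =>
    simpa only [simSubst, ter, Finset.image_union] using Finset.union_subset_union (ihA σ) (ihB σ)
  | all x A ih | ex x A ih =>
    intro s hs
    obtain ⟨hsx, hs⟩ := Finset.mem_erase.1 hs
    obtain ⟨r, hr, hrs⟩ := Finset.mem_image.1 (ih _ hs)
    have hrx : r ≠ Tm.var x := by
      rintro rfl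
      exact hsx (by simpa [underBinder] using hrs.symm)
    exact Finset.mem_image.2 ⟨r, Finset.mem_erase.2 ⟨hrx, hr⟩,
      by simpa [underBinder, hrx] using hrs⟩

theorem rels_simSubst (A : Fm) (σ : Tm → Tm) : (A.simSubst σ).rels = A.rels := by
  induction A generalizing σ <;> simp_all [simSubst, rels]

theorem boundVars_simSubst (A : Fm) (σ : Tm → Tm) : (A.simSubst σ).boundVars = A.boundVars := by
  induction A generalizing σ <;> simp_all [simSubst, boundVars]

theorem boundVars_subst (A : Fm) (u t : Tm) : (A.subst u t).boundVars = A.boundVars := by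
  rw [subst_eq_simSubst, boundVars_simSubst]

/-! ### Capture -/

theorem CaptureFree.congr {A : Fm} {σ τ : Tm → Tm} (h : ∀ s ∈ A.ter, σ s = τ s)
    (hσ : A.CaptureFree σ) : A.CaptureFree τ := by
  induction A generalizing σ τ with
  | rel | eq | bot | top => trivial
  | and A B ihA ihB | or A B ihA ihB | imp A B ihA ihB =>
    exact ⟨ihA (fun s hs => h s (Finset.mem_union_left _ hs)) hσ.1,
      ihB (fun s hs => h s (Finset.mem_union_right _ hs)) hσ.2⟩
  | all x A ih | ex x A ih =>
    exact ⟨fun s hs => h s hs ▸ hσ.1 s hs, ih (underBinder_congr h) hσ.2⟩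

theorem captureFree_id (A : Fm) : A.CaptureFree id := by
  induction A with
  | rel | eq | bot | top => trivial
  | and A B ihA ihB | or A B ihA ihB | imp A B ihA ihB => exact ⟨ihA, ihB⟩
  | all x A ih | ex x A ih =>
    exact ⟨fun s hs => Finset.ne_of_mem_erase hs, by rwa [underBinder_id]⟩

theorem captureFree_subst_iff {A : Fm} {u t : Tm} :
    A.CaptureFree (Tm.subst · u t) ↔ A.freeFor t u := by
  induction A with
  | rel | eq | bot | top => exact Iff.rfl
  | and A B ihA ihB | or A B ihA ihB | imp A B ihA ihB => exact and_congr ihA ihB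
  | all x A ih | ex x A ih =>
    simp only [CaptureFree, freeFor, ter]
    by_cases hux : u = Tm.var x
    · subst hux
      rw [underBinder_subst_self]
      simp only [captureFree_id, Tm.subst]
      grind
    · have hfree : u ∉ A.ter → A.freeFor t u := fun hu =>
        ih.1 (A.captureFree_id.congr fun s hs => (if_neg (ne_of_mem_of_not_mem hs hu)).symm)
      rw [underBinder_subst_of_ne hux, ih]
      simp only [Tm.subst]
      grind

theorem simSubst_simSubst {A : Fm} {σ τ : Tm → Tm} (hτ : A.CaptureFree τ) :
    (A.simSubst τ).simSubst σ = A.simSubst (σ ∘ τ) := by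
  induction A generalizing σ τ with
  | rel | eq | bot | top => simp [simSubst]
  | and A B ihA ihB | or A B ihA ihB | imp A B ihA ihB =>
    simp only [simSubst, ihA hτ.1, ihB hτ.2]
  | all x A ih | ex x A ih =>
    simp only [simSubst, ih hτ.2, simSubst_congr (underBinder_comp hτ.1)]

theorem CaptureFree.simSubst_of_comp {A : Fm} {σ τ : Tm → Tm} (hτ : A.CaptureFree τ)
    (hστ : A.CaptureFree (σ ∘ τ)) : (A.simSubst τ).CaptureFree σ := by
  induction A generalizing σ τ with
  | rel | eq | bot | top => trivial
  | and A B ihA ihB | or A B ihA ihB | imp A B ihA ihB =>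
    exact ⟨ihA hτ.1 hστ.1, ihB hτ.2 hστ.2⟩
  | all x A ih | ex x A ih =>
    refine ⟨fun s hs => ?_, ih hτ.2 (hστ.2.congr fun s hs => (underBinder_comp hτ.1 s hs).symm)⟩
    obtain ⟨r, hr, rfl⟩ := Finset.mem_image.1 (ter_simSubst_subset (all x A) τ hs)
    exact hστ.1 r hr

end Fm

/-- Every term is either fixed by `σ` or sent outside `B`. For `B` the bound variables of a
formula this excludes capture. -/
def Avoids (σ : Tm → Tm) (B : Finset Tm) : Prop :=
  ∀ s, σ s = s ∨ σ s ∉ B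

theorem avoids_id (B : Finset Tm) : Avoids id B :=
  fun _ => Or.inl rfl

theorem avoids_subst {z : Tm} {B : Finset Tm} (hz : z ∉ B) (u : Tm) :
    Avoids (Tm.subst · u z) B := by
  intro s
  simp only [Tm.subst]
  grind

theorem Avoids.mono {σ : Tm → Tm} {B B' : Finset Tm} (h : Avoids σ B) (hB : B' ⊆ B) :
    Avoids σ B' :=
  fun s => (h s).imp_right (mt (@hB (σ s)))

theorem avoids_union {σ : Tm → Tm} {B B' : Finset Tm} :
    Avoids σ (B ∪ B') ↔ Avoids σ B ∧ Avoids σ B' := by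
  simp only [Avoids, Finset.notMem_union, or_and_left, forall_and]

theorem Avoids.underBinder {σ : Tm → Tm} {B : Finset Tm} (h : Avoids σ B) (x : ℕ) :
    Avoids (underBinder x σ) B := by
  intro s
  simp only [_root_.underBinder]
  grind [h s]

theorem Avoids.update {σ : Tm → Tm} {B : Finset Tm} (h : Avoids σ B) {z : Tm} (hz : z ∉ B)
    (u : Tm) : Avoids (Function.update σ u z) B := by
  intro s
  rw [Function.update_apply]
  grind [h s]

theorem subst_comp_underBinder {x : ℕ} {σ : Tm → Tm} (hσ : Avoids σ {Tm.var x}) (t : Tm) :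
    (Tm.subst · (Tm.var x) (σ t)) ∘ underBinder x σ = σ ∘ (Tm.subst · (Tm.var x) t) := by
  funext s
  have hs := hσ s
  simp only [Function.comp, Tm.subst, underBinder]
  grind

theorem subst_comp_subst_eq_self {t z s : Tm} (hs : s ≠ z) :
    ((Tm.subst · z t) ∘ (Tm.subst · t z)) s = s := by
  simp only [Function.comp, Tm.subst]
  grind

namespace Fm

theorem CaptureFree.comp_of_avoids {A : Fm} {σ τ : Tm → Tm} (hτ : A.CaptureFree τ)
    (hσ : Avoids σ A.boundVars) : A.CaptureFree (σ ∘ τ) := by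
  induction A generalizing σ τ with
  | rel | eq | bot | top => trivial
  | and A B ihA ihB | or A B ihA ihB | imp A B ihA ihB =>
    exact ⟨ihA hτ.1 (hσ.mono Finset.subset_union_left),
      ihB hτ.2 (hσ.mono Finset.subset_union_right)⟩
  | all x A ih | ex x A ih =>
    refine ⟨fun s hs => ?_, .congr (underBinder_comp hτ.1)
      (ih hτ.2 ((hσ.mono (Finset.subset_insert _ _)).underBinder x))⟩
    rcases hσ (τ s) with hfix | hout
    · exact hfix.trans_ne (hτ.1 s hs)
    · exact (ne_of_mem_of_not_mem (Finset.mem_insert_self _ _) hout).symm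

theorem captureFree_of_avoids {A : Fm} {σ : Tm → Tm} (hσ : Avoids σ A.boundVars) :
    A.CaptureFree σ :=
  A.captureFree_id.comp_of_avoids hσ

theorem freeFor_of_notMem_boundVars {A : Fm} {t : Tm} (ht : t ∉ A.boundVars) (u : Tm) :
    A.freeFor t u :=
  captureFree_subst_iff.1 (captureFree_of_avoids (avoids_subst ht u))

section Quantifier

variable {A : Fm} {x : ℕ} {t : Tm} {σ : Tm → Tm}

theorem simSubst_subst (hfree : A.freeFor t (Tm.var x))
    (hσ : Avoids σ (insert (Tm.var x) A.boundVars)) :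
    (A.subst (Tm.var x) t).simSubst σ =
      (A.simSubst (underBinder x σ)).subst (Tm.var x) (σ t) := by
  have hσA : A.CaptureFree (underBinder x σ) :=
    captureFree_of_avoids ((hσ.mono (Finset.subset_insert _ _)).underBinder x)
  rw [subst_eq_simSubst, subst_eq_simSubst, simSubst_simSubst (captureFree_subst_iff.2 hfree),
    simSubst_simSubst hσA, subst_comp_underBinder (hσ.mono (by simp))]

theorem freeFor.simSubst (hfree : A.freeFor t (Tm.var x))
    (hσ : Avoids σ (insert (Tm.var x) A.boundVars)) :
    (A.simSubst (underBinder x σ)).freeFor (σ t) (Tm.var x) := by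
  have hσA : Avoids σ A.boundVars := hσ.mono (Finset.subset_insert _ _)
  refine captureFree_subst_iff.1
    ((captureFree_of_avoids (hσA.underBinder x)).simSubst_of_comp ?_)
  rw [subst_comp_underBinder (hσ.mono (by simp))]
  exact (captureFree_subst_iff.2 hfree).comp_of_avoids hσA

end Quantifier

theorem subst_subst_eq_self {A : Fm} {z : Tm} (hter : z ∉ A.ter) (hbound : z ∉ A.boundVars)
    (t : Tm) : (A.subst t z).subst z t = A := by
  rw [subst_eq_simSubst, subst_eq_simSubst,
    simSubst_simSubst (captureFree_of_avoids (avoids_subst hbound t))]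
  exact simSubst_eq_self fun s hs => subst_comp_subst_eq_self (ne_of_mem_of_not_mem hs hter)

theorem freeFor_subst_back {A : Fm} {z : Tm} (hter : z ∉ A.ter) (hbound : z ∉ A.boundVars)
    (t : Tm) : (A.subst t z).freeFor t z := by
  rw [← captureFree_subst_iff, subst_eq_simSubst]
  exact (captureFree_of_avoids (avoids_subst hbound t)).simSubst_of_comp
    (A.captureFree_id.congr fun s hs =>
      (subst_comp_subst_eq_self (ne_of_mem_of_not_mem hs hter)).symm)

/-! ### Languages -/

theorem lang_bot : Fm.bot.lang = ∅ := rfl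

theorem lang_and (A B : Fm) : (Fm.and A B).lang = A.lang ∪ B.lang := by
  simp only [lang, ter, rels, Finset.image_union, Finset.union_union_union_comm]

theorem lang_or (A B : Fm) : (Fm.or A B).lang = A.lang ∪ B.lang :=
  lang_and A B

theorem lang_imp (A B : Fm) : (Fm.imp A B).lang = A.lang ∪ B.lang :=
  lang_and A B

theorem inl_mem_lang {A : Fm} {s : Tm} : Sum.inl s ∈ A.lang ↔ s ∈ A.ter := by
  simp [lang]

theorem inr_mem_lang {A : Fm} {r : ℕ} : Sum.inr r ∈ A.lang ↔ r ∈ A.rels := by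
  simp [lang]

theorem lang_all (x : ℕ) (A : Fm) : (Fm.all x A).lang = A.lang.erase (Sum.inl (Tm.var x)) := by
  ext (s | r) <;> simp [inl_mem_lang, inr_mem_lang, ter, rels]

theorem lang_ex (x : ℕ) (A : Fm) : (Fm.ex x A).lang = A.lang.erase (Sum.inl (Tm.var x)) :=
  lang_all x A

theorem lang_subst_subset (A : Fm) (u t : Tm) :
    (A.subst u t).lang ⊆ insert (Sum.inl t) (A.lang.erase (Sum.inl u)) := by
  rw [subst_eq_simSubst]
  rintro (s | r) h
  · obtain ⟨r, hr, rfl⟩ := Finset.mem_image.1 (ter_simSubst_subset A _ (inl_mem_lang.1 h))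
    simp only [Finset.mem_insert, Finset.mem_erase, inl_mem_lang, Sum.inl.injEq, ne_eq, Tm.subst]
    grind
  · simpa [inr_mem_lang, rels_simSubst] using h

theorem lang_all_subst_subset (A : Fm) (t : Tm) (z : ℕ) :
    (Fm.all z (A.subst t (Tm.var z))).lang ⊆ A.lang.erase (Sum.inl t) := by
  rw [lang_all]
  exact Finset.subset_insert_iff.1 (A.lang_subst_subset t _)

end Fm

theorem terM_cons (A : Fm) (Γ : Multiset Fm) : terM (A ::ₘ Γ) = A.ter ∪ terM Γ := by
  simp [terM]

theorem langM_cons (A : Fm) (Γ : Multiset Fm) : langM (A ::ₘ Γ) = A.lang ∪ langM Γ := by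
  simp [langM]

theorem langM_add (Γ Δ : Multiset Fm) : langM (Γ + Δ) = langM Γ ∪ langM Δ := by
  simp [langM]

theorem terM_add (Γ Δ : Multiset Fm) : terM (Γ + Δ) = terM Γ ∪ terM Δ := by
  simp [terM]

theorem inl_mem_langM {Γ : Multiset Fm} {s : Tm} : Sum.inl s ∈ langM Γ ↔ s ∈ terM Γ := by
  induction Γ using Multiset.induction with
  | empty => simp [langM, terM]
  | cons A Γ ih => simp [langM_cons, terM_cons, Fm.inl_mem_lang, ih]

/-- The variables bound by some quantifier of some formula of the multiset, as terms. -/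
def boundVarsM (Γ : Multiset Fm) : Finset Tm := (Γ.map Fm.boundVars).sup

theorem boundVarsM_cons (A : Fm) (Γ : Multiset Fm) :
    boundVarsM (A ::ₘ Γ) = A.boundVars ∪ boundVarsM Γ := by
  simp [boundVarsM]

theorem boundVarsM_add (Γ Δ : Multiset Fm) :
    boundVarsM (Γ + Δ) = boundVarsM Γ ∪ boundVarsM Δ := by
  simp [boundVarsM]

theorem exists_var_notMem (S : Finset Tm) : ∃ y, Tm.var y ∉ S := by
  have hinj : Function.Injective Tm.var := fun _ _ => Tm.var.inj
  obtain ⟨y, hy⟩ := Infinite.exists_notMem_finset (S.preimage Tm.var hinj.injOn)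
  exact ⟨y, by simpa using hy⟩

theorem map_simSubst_congr {Γ : Multiset Fm} {σ τ : Tm → Tm} (h : ∀ s ∈ terM Γ, σ s = τ s) :
    Γ.map (·.simSubst σ) = Γ.map (·.simSubst τ) :=
  Multiset.map_congr rfl fun _ hF => Fm.simSubst_congr fun s hs =>
    h s (Finset.mem_of_subset (Multiset.le_sup (Multiset.mem_map_of_mem Fm.ter hF)) hs)

theorem map_simSubst_id (Γ : Multiset Fm) : Γ.map (·.simSubst id) = Γ := by
  simp only [Fm.simSubst_id, Multiset.map_id']

theorem map_simSubst_update {Γ : Multiset Fm} {u : Tm} (hu : u ∉ terM Γ) (σ : Tm → Tm) (t : Tm) :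
    Γ.map (·.simSubst (Function.update σ u t)) = Γ.map (·.simSubst σ) :=
  map_simSubst_congr fun _ hs => Function.update_of_ne (ne_of_mem_of_not_mem hs hu) t σ

theorem map_simSubst_subst {Γ : Multiset Fm} {u : Tm} (hu : u ∉ terM Γ) (t : Tm) :
    Γ.map (·.simSubst (Tm.subst · u t)) = Γ :=
  (map_simSubst_congr fun _ hs => if_neg (ne_of_mem_of_not_mem hs hu)).trans (map_simSubst_id Γ)

theorem multiset_add_singleton {α : Type*} (s : Multiset α) (a : α) : s + {a} = a ::ₘ s := by
  rw [add_comm, Multiset.singleton_add]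

theorem multiset_add_eq_cons {α : Type*} {a : α} {s t u : Multiset α} (h : s + t = a ::ₘ u) :
    (∃ s', s = a ::ₘ s' ∧ s' + t = u) ∨ ∃ t', t = a ::ₘ t' ∧ s + t' = u := by
  have ha : a ∈ s + t := h ▸ Multiset.mem_cons_self a u
  rcases Multiset.mem_add.1 ha with hs | ht
  · obtain ⟨s', rfl⟩ := Multiset.exists_cons_of_mem hs
    exact .inl ⟨s', rfl, by simpa using h⟩
  · obtain ⟨t', rfl⟩ := Multiset.exists_cons_of_mem ht
    exact .inr ⟨t', rfl, by simpa using h⟩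

/-! ### Derivability -/

theorem DerG.succ {Rules : Set GeomRule} {n : ℕ} {Γ Δ : Multiset Fm} (d : DerG Rules n Γ Δ) :
    DerG Rules (n + 1) Γ Δ := by
  induction d with
  | ax h => exact .ax h
  | botL => exact .botL
  | topR => exact .topR
  | andL _ ih => exact .andL ih
  | andR _ _ ihA ihB => exact .andR ihA ihB
  | orL _ _ ihA ihB => exact .orL ihA ihB
  | orR _ ih => exact .orR ih
  | impL _ _ ihA ihB => exact .impL ihA ihB
  | impR _ ih => exact .impR ih
  | allL hfree _ ih => exact .allL hfree ih
  | allR hfree hy _ ih => exact .allR hfree hy ih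
  | exL hfree hy _ ih => exact .exL hfree hy ih
  | exR hfree _ ih => exact .exR hfree ih
  | geom hR hfresh _ ih => exact .geom hR hfresh ih

theorem DerG.mono {Rules : Set GeomRule} {n m : ℕ} {Γ Δ : Multiset Fm} (hnm : n ≤ m)
    (d : DerG Rules n Γ Δ) : DerG Rules m Γ Δ := by
  induction hnm with
  | refl => exact d
  | step _ ih => exact ih.succ

namespace Derivable

variable {Rules : Set GeomRule} {Γ Δ Γ₁ Γ₂ Δ₁ Δ₂ : Multiset Fm} {A B P : Fm} {x y : ℕ} {t : Tm}

theorem exists_common_height (h₁ : Derivable Rules Γ₁ Δ₁) (h₂ : Derivable Rules Γ₂ Δ₂) :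
    ∃ n, DerG Rules n Γ₁ Δ₁ ∧ DerG Rules n Γ₂ Δ₂ := by
  obtain ⟨n, d₁⟩ := h₁
  obtain ⟨m, d₂⟩ := h₂
  exact ⟨max n m, d₁.mono (le_max_left n m), d₂.mono (le_max_right n m)⟩

theorem ax (hP : P.isAtom) : Derivable Rules (P ::ₘ Γ) (P ::ₘ Δ) :=
  ⟨0, .ax hP⟩

theorem botL : Derivable Rules (Fm.bot ::ₘ Γ) Δ :=
  ⟨0, .botL⟩

theorem topR : Derivable Rules Γ (Fm.top ::ₘ Δ) :=
  ⟨0, .topR⟩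

theorem andL (h : Derivable Rules (A ::ₘ B ::ₘ Γ) Δ) : Derivable Rules (Fm.and A B ::ₘ Γ) Δ :=
  h.imp' _ fun _ => .andL

theorem andR (hA : Derivable Rules Γ (A ::ₘ Δ)) (hB : Derivable Rules Γ (B ::ₘ Δ)) :
    Derivable Rules Γ (Fm.and A B ::ₘ Δ) :=
  (hA.exists_common_height hB).imp' _ fun _ d => .andR d.1 d.2

theorem orL (hA : Derivable Rules (A ::ₘ Γ) Δ) (hB : Derivable Rules (B ::ₘ Γ) Δ) :
    Derivable Rules (Fm.or A B ::ₘ Γ) Δ :=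
  (hA.exists_common_height hB).imp' _ fun _ d => .orL d.1 d.2

theorem orR (h : Derivable Rules Γ (A ::ₘ B ::ₘ Δ)) : Derivable Rules Γ (Fm.or A B ::ₘ Δ) :=
  h.imp' _ fun _ => .orR

theorem impL (hA : Derivable Rules Γ (A ::ₘ Δ)) (hB : Derivable Rules (B ::ₘ Γ) Δ) :
    Derivable Rules (Fm.imp A B ::ₘ Γ) Δ :=
  (hA.exists_common_height hB).imp' _ fun _ d => .impL d.1 d.2

theorem impR (h : Derivable Rules (A ::ₘ Γ) (B ::ₘ Δ)) :
    Derivable Rules Γ (Fm.imp A B ::ₘ Δ) :=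
  h.imp' _ fun _ => .impR

theorem allL (hfree : A.freeFor t (Tm.var x))
    (h : Derivable Rules (A.subst (Tm.var x) t ::ₘ Fm.all x A ::ₘ Γ) Δ) :
    Derivable Rules (Fm.all x A ::ₘ Γ) Δ :=
  h.imp' _ fun _ => .allL hfree

theorem allR (hfree : A.freeFor (Tm.var y) (Tm.var x))
    (hy : Tm.var y ∉ terM Γ ∪ terM Δ ∪ (Fm.all x A).ter)
    (h : Derivable Rules Γ (A.subst (Tm.var x) (Tm.var y) ::ₘ Δ)) :
    Derivable Rules Γ (Fm.all x A ::ₘ Δ) :=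
  h.imp' _ fun _ => .allR hfree hy

theorem exL (hfree : A.freeFor (Tm.var y) (Tm.var x))
    (hy : Tm.var y ∉ terM Γ ∪ terM Δ ∪ (Fm.ex x A).ter)
    (h : Derivable Rules (A.subst (Tm.var x) (Tm.var y) ::ₘ Γ) Δ) :
    Derivable Rules (Fm.ex x A ::ₘ Γ) Δ :=
  h.imp' _ fun _ => .exL hfree hy

theorem exR (hfree : A.freeFor t (Tm.var x))
    (h : Derivable Rules Γ (Fm.ex x A ::ₘ A.subst (Tm.var x) t ::ₘ Δ)) :
    Derivable Rules Γ (Fm.ex x A ::ₘ Δ) :=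
  h.imp' _ fun _ => .exR hfree

end Derivable

/-! ### Substitution and weakening -/

theorem exists_eigenvariable_rename {A : Fm} {x y : ℕ} {σ : Tm → Tm} {B : Finset Tm}
    (hfree : A.freeFor (Tm.var y) (Tm.var x)) (hy : Tm.var y ∉ A.ter.erase (Tm.var x))
    (hσA : Avoids σ (insert (Tm.var x) A.boundVars)) (hσB : Avoids σ B) (S : Finset Tm) :
    ∃ z, Tm.var z ∉ S ∧
      Avoids (Function.update σ (Tm.var y) (Tm.var z)) (A.boundVars ∪ B) ∧
      (A.simSubst (underBinder x σ)).freeFor (Tm.var z) (Tm.var x) ∧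
      (A.subst (Tm.var x) (Tm.var y)).simSubst (Function.update σ (Tm.var y) (Tm.var z)) =
        (A.simSubst (underBinder x σ)).subst (Tm.var x) (Tm.var z) := by
  obtain ⟨z, hz⟩ := exists_var_notMem (S ∪ insert (Tm.var x) A.boundVars ∪ B)
  simp only [Finset.notMem_union] at hz
  have hσzA : Avoids (Function.update σ (Tm.var y) (Tm.var z)) (insert (Tm.var x) A.boundVars) :=
    hσA.update hz.1.2 _
  have hunder : A.simSubst (underBinder x (Function.update σ (Tm.var y) (Tm.var z))) =
      A.simSubst (underBinder x σ) :=
    Fm.simSubst_congr (underBinder_congr fun s hs =>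
      Function.update_of_ne (ne_of_mem_of_not_mem hs hy) _ _)
  have hfreez := hfree.simSubst hσzA
  have hsubst := Fm.simSubst_subst hfree hσzA
  rw [hunder, Function.update_self] at hfreez hsubst
  exact ⟨z, hz.1.1, avoids_union.2 ⟨hσzA.mono (Finset.subset_insert _ _), hσB.update hz.2 _⟩,
    hfreez, hsubst⟩

theorem DerG.simSubst_add {n : ℕ} {Γ Δ : Multiset Fm} {σ : Tm → Tm} (d : DerG ∅ n Γ Δ)
    (hσ : Avoids σ (boundVarsM (Γ + Δ))) (Γ' Δ' : Multiset Fm) :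
    DerG ∅ n (Γ.map (·.simSubst σ) + Γ') (Δ.map (·.simSubst σ) + Δ') := by
  induction d generalizing σ with
    simp only [boundVarsM_add, boundVarsM_cons, Fm.boundVars, Fm.boundVars_subst, avoids_union,
      Multiset.map_cons, Multiset.cons_add, Finset.notMem_union] at *
  | ax hP => exact .ax (hP.simSubst σ)
  | botL => exact .botL
  | topR => exact .topR
  | andL _ ih => exact .andL (ih (by tauto))
  | andR _ _ ihA ihB => exact .andR (ihA (by tauto)) (ihB (by tauto))
  | orL _ _ ihA ihB => exact .orL (ihA (by tauto)) (ihB (by tauto))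
  | orR _ ih => exact .orR (ih (by tauto))
  | impL _ _ ihA ihB => exact .impL (ihA (by tauto)) (ihB (by tauto))
  | impR _ ih => exact .impR (ih (by tauto))
  | allL hfree _ ih =>
    obtain ⟨hσA, hσΓ, hσΔ⟩ := hσ
    have d := ih ⟨hσA.mono (Finset.subset_insert _ _), hσA, hσΓ, hσΔ⟩
    rw [Fm.simSubst_subst hfree hσA] at d
    exact .allL (hfree.simSubst hσA) d
  | exR hfree _ ih =>
    obtain ⟨hσΓ, hσA, hσΔ⟩ := hσ
    have d := ih ⟨hσΓ, hσA, hσA.mono (Finset.subset_insert _ _), hσΔ⟩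
    rw [Fm.simSubst_subst hfree hσA] at d
    exact .exR (hfree.simSubst hσA) d
  | allR hfree hy _ ih =>
    obtain ⟨⟨hyΓ, hyΔ⟩, hyA⟩ := hy
    obtain ⟨hσΓ, hσA, hσΔ⟩ := hσ
    obtain ⟨z, hz, hσz, hfreez, hA⟩ :=
      exists_eigenvariable_rename hfree hyA hσA (avoids_union.2 ⟨hσΓ, hσΔ⟩) _
    simp only [avoids_union] at hσz
    have d := ih ⟨hσz.2.1, hσz.1, hσz.2.2⟩
    rw [hA, map_simSubst_update hyΓ, map_simSubst_update hyΔ] at d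
    exact .allR hfreez hz d
  | exL hfree hy _ ih =>
    obtain ⟨⟨hyΓ, hyΔ⟩, hyA⟩ := hy
    obtain ⟨hσA, hσΓ, hσΔ⟩ := hσ
    obtain ⟨z, hz, hσz, hfreez, hA⟩ :=
      exists_eigenvariable_rename hfree hyA hσA (avoids_union.2 ⟨hσΓ, hσΔ⟩) _
    simp only [avoids_union] at hσz
    have d := ih hσz
    rw [hA, map_simSubst_update hyΓ, map_simSubst_update hyΔ] at d
    exact .exL hfreez hz d
  | geom hR => exact absurd hR (Set.notMem_empty _)

namespace Derivable

variable {Γ Δ : Multiset Fm} {A : Fm} {t : Tm} {z : ℕ}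

theorem simSubst {σ : Tm → Tm} (h : Derivable ∅ Γ Δ) (hσ : Avoids σ (boundVarsM (Γ + Δ))) :
    Derivable ∅ (Γ.map (·.simSubst σ)) (Δ.map (·.simSubst σ)) :=
  h.imp fun _ d => by simpa only [add_zero] using d.simSubst_add hσ 0 0

theorem weaken (h : Derivable ∅ Γ Δ) (Γ' Δ' : Multiset Fm) : Derivable ∅ (Γ + Γ') (Δ + Δ') :=
  h.imp fun _ d => by simpa only [map_simSubst_id] using d.simSubst_add (avoids_id _) Γ' Δ'

theorem weaken_left (h : Derivable ∅ Γ Δ) (A : Fm) : Derivable ∅ (A ::ₘ Γ) Δ := by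
  simpa only [add_zero, multiset_add_singleton] using h.weaken {A} 0

theorem weaken_right (h : Derivable ∅ Γ Δ) (A : Fm) : Derivable ∅ Γ (A ::ₘ Δ) := by
  simpa only [add_zero, multiset_add_singleton] using h.weaken 0 {A}

theorem generalize_right (h : Derivable ∅ Γ (A ::ₘ Δ)) (ht : t ∉ terM Γ ∪ terM Δ)
    (hz : Tm.var z ∉ terM Γ ∪ terM Δ) (hbound : Tm.var z ∉ boundVarsM (Γ + A ::ₘ Δ)) :
    Derivable ∅ Γ (Fm.all z (A.subst t (Tm.var z)) ::ₘ Δ) := by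
  have hA : Tm.var z ∉ (A.subst t (Tm.var z)).boundVars := by
    simp only [boundVarsM_add, boundVarsM_cons, Finset.notMem_union] at hbound
    rw [Fm.boundVars_subst]
    exact hbound.2.1
  have hsubst : Derivable ∅ Γ (A.subst t (Tm.var z) ::ₘ Δ) := by
    obtain ⟨htΓ, htΔ⟩ := Finset.notMem_union.1 ht
    simpa only [Multiset.map_cons, map_simSubst_subst htΓ, map_simSubst_subst htΔ,
      Fm.subst_eq_simSubst] using h.simSubst (avoids_subst hbound t)
  refine .allR (y := z) (Fm.freeFor_of_notMem_boundVars hA _) ?_ ?_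
  · exact Finset.notMem_union.2 ⟨hz, Finset.notMem_erase _ _⟩
  · rwa [Fm.subst_self]

theorem generalize_left (h : Derivable ∅ (A ::ₘ Γ) Δ) (hter : Tm.var z ∉ A.ter)
    (hbound : Tm.var z ∉ A.boundVars) (t : Tm) :
    Derivable ∅ (Fm.all z (A.subst t (Tm.var z)) ::ₘ Γ) Δ := by
  refine .allL (Fm.freeFor_subst_back hter hbound t) ?_
  rw [Fm.subst_subst_eq_self hter hbound, Multiset.cons_swap]
  exact h.weaken_left _

end Derivable

/-! ### Split-interpolants -/

/-- The partition `Γ₁;Γ₂ ⇒ Δ₁;Δ₂` has a split-interpolant in G. -/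
def HasSplitInterpolant (Γ₁ Γ₂ Δ₁ Δ₂ : Multiset Fm) : Prop :=
  ∃ C, SplitInterpolant ∅ Γ₁ Γ₂ Δ₁ Δ₂ C

namespace HasSplitInterpolant

variable {Γ Γ' Γ₁ Γ₂ Δ Δ' Δ₁ Δ₂ : Multiset Fm}

theorem symm (h : HasSplitInterpolant Γ₁ Γ₂ Δ₁ Δ₂) : HasSplitInterpolant Γ₂ Γ₁ Δ₂ Δ₁ := by
  obtain ⟨C, h₁, h₂, hC⟩ := h
  refine ⟨C.imp .bot, (h₂.weaken_right _).impR, h₁.impL .botL, ?_⟩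
  rwa [Fm.lang_imp, Fm.lang_bot, Finset.union_empty, Finset.inter_comm]

-- In `hrule` the interpolant stands last, as `Δ + {C}`, because the rules of G act on the head.
theorem unary_rule (h : HasSplitInterpolant Γ₁ Γ₂ Δ₁ Δ₂)
    (hrule : ∀ C : Fm, Derivable ∅ Γ₁ (Δ₁ + {C}) → Derivable ∅ Γ (Δ + {C}))
    (hlang : langM (Γ₁ + Δ₁) ⊆ langM (Γ + Δ)) :
    HasSplitInterpolant Γ Γ₂ Δ Δ₂ := by
  obtain ⟨C, h₁, h₂, hC⟩ := h
  simp only [multiset_add_singleton] at hrule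
  exact ⟨C, hrule C h₁, h₂, hC.trans (Finset.inter_subset_inter_right hlang)⟩

theorem eigenvariable_rule {y : Tm} (h : HasSplitInterpolant Γ₁ Γ₂ Δ₁ Δ₂)
    (hy : y ∉ terM Γ₂ ∪ terM Δ₂)
    (hrule : ∀ C : Fm, y ∉ C.ter → Derivable ∅ Γ₁ (Δ₁ + {C}) → Derivable ∅ Γ (Δ + {C}))
    (hlang : langM (Γ₁ + Δ₁) ⊆ insert (Sum.inl y) (langM (Γ + Δ))) :
    HasSplitInterpolant Γ Γ₂ Δ Δ₂ := by
  obtain ⟨C, h₁, h₂, hC⟩ := h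
  obtain ⟨hC₁, hC₂⟩ := Finset.subset_inter_iff.1 hC
  simp only [multiset_add_singleton] at hrule
  have hyC : Sum.inl y ∉ C.lang := fun hmem =>
    hy (terM_add Γ₂ Δ₂ ▸ inl_mem_langM.1 (hC₂ hmem))
  have hCΓΔ : C.lang ⊆ langM (Γ + Δ) :=
    (Finset.subset_insert_iff_of_notMem hyC).1 (hC₁.trans hlang)
  exact ⟨C, hrule C (mt Fm.inl_mem_lang.2 hyC) h₁, h₂, Finset.subset_inter hCΓΔ hC₂⟩

theorem binary_rule (h : HasSplitInterpolant Γ₁ Γ₂ Δ₁ Δ₂) (h' : HasSplitInterpolant Γ' Γ₂ Δ' Δ₂)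
    (hrule : ∀ C : Fm, Derivable ∅ Γ₁ (Δ₁ + {C}) → Derivable ∅ Γ' (Δ' + {C}) →
      Derivable ∅ Γ (Δ + {C}))
    (hlang : langM (Γ₁ + Δ₁) ⊆ langM (Γ + Δ)) (hlang' : langM (Γ' + Δ') ⊆ langM (Γ + Δ)) :
    HasSplitInterpolant Γ Γ₂ Δ Δ₂ := by
  obtain ⟨C, h₁, h₂, hC⟩ := h
  obtain ⟨C', h₁', h₂', hC'⟩ := h'
  simp only [multiset_add_singleton] at hrule
  have hor : Derivable ∅ Γ₁ (C.or C' ::ₘ Δ₁) :=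
    .orR (Multiset.cons_swap C C' Δ₁ ▸ h₁.weaken_right C')
  refine ⟨C.or C', hrule _ hor (h₁'.weaken_right C).orR, h₂.orL h₂', ?_⟩
  rw [Fm.lang_or]
  exact Finset.union_subset (hC.trans (Finset.inter_subset_inter_right hlang))
    (hC'.trans (Finset.inter_subset_inter_right hlang'))

theorem of_generalization {C : Fm} {t : Tm} (h₁ : Derivable ∅ Γ₁ (C ::ₘ Δ₁))
    (h₂ : Derivable ∅ (C ::ₘ Γ₂) Δ₂) (ht : Sum.inl t ∉ langM (Γ₁ + Δ₁))
    (hC₁ : C.lang ⊆ insert (Sum.inl t) (langM (Γ₁ + Δ₁))) (hC₂ : C.lang ⊆ langM (Γ₂ + Δ₂)) :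
    HasSplitInterpolant Γ₁ Γ₂ Δ₁ Δ₂ := by
  obtain ⟨z, hz⟩ := exists_var_notMem
    (terM Γ₁ ∪ terM Δ₁ ∪ boundVarsM (Γ₁ + C ::ₘ Δ₁) ∪ C.ter ∪ C.boundVars)
  simp only [Finset.notMem_union, and_assoc] at hz
  obtain ⟨hzΓ, hzΔ, hzbound, hzC, hzCbound⟩ := hz
  rw [inl_mem_langM, terM_add] at ht
  have hlang := C.lang_all_subst_subset t z
  exact ⟨.all z (C.subst t (Tm.var z)),
    h₁.generalize_right ht (Finset.notMem_union.2 ⟨hzΓ, hzΔ⟩) hzbound,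
    h₂.generalize_left hzC hzCbound t,
    Finset.subset_inter (hlang.trans (Finset.subset_insert_iff.1 hC₁))
      (hlang.trans ((Finset.erase_subset _ _).trans hC₂))⟩

theorem instantiation_rule {t : Tm} (h : HasSplitInterpolant Γ₁ Γ₂ Δ₁ Δ₂)
    (hrule : ∀ C : Fm, Derivable ∅ Γ₁ (Δ₁ + {C}) → Derivable ∅ Γ (Δ + {C}))
    (hlang : langM (Γ₁ + Δ₁) ⊆ insert (Sum.inl t) (langM (Γ + Δ))) :
    HasSplitInterpolant Γ Γ₂ Δ Δ₂ := by
  by_cases ht : Sum.inl t ∈ langM (Γ + Δ)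
  · rw [Finset.insert_eq_of_mem ht] at hlang
    exact h.unary_rule hrule hlang
  · obtain ⟨C, h₁, h₂, hC⟩ := h
    simp only [multiset_add_singleton] at hrule
    exact of_generalization (hrule C h₁) h₂ ht ((hC.trans Finset.inter_subset_left).trans hlang)
      (hC.trans Finset.inter_subset_right)

end HasSplitInterpolant

/-- Every partition of the sequent `Γ ⇒ Δ` has a split-interpolant in G. -/
def Interpolable (Γ Δ : Multiset Fm) : Prop :=
  ∀ ⦃Γ₁ Γ₂ Δ₁ Δ₂⦄, Γ₁ + Γ₂ = Γ → Δ₁ + Δ₂ = Δ → HasSplitInterpolant Γ₁ Γ₂ Δ₁ Δ₂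

namespace Interpolable

variable {Γ Δ : Multiset Fm} {A B F P : Fm} {x y : ℕ} {t : Tm}

theorem of_principal_left
    (h : ∀ Γ₁ Γ₂ Δ₁ Δ₂, Γ₁ + Γ₂ = Γ → Δ₁ + Δ₂ = Δ → HasSplitInterpolant (F ::ₘ Γ₁) Γ₂ Δ₁ Δ₂) :
    Interpolable (F ::ₘ Γ) Δ := by
  intro Γ₁ Γ₂ Δ₁ Δ₂ hΓ hΔ
  obtain ⟨Γ₁', rfl, hΓ'⟩ | ⟨Γ₂', rfl, hΓ'⟩ := multiset_add_eq_cons hΓ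
  · exact h _ _ _ _ hΓ' hΔ
  · exact (h _ _ _ _ ((add_comm _ _).trans hΓ') ((add_comm _ _).trans hΔ)).symm

theorem of_principal_right
    (h : ∀ Γ₁ Γ₂ Δ₁ Δ₂, Γ₁ + Γ₂ = Γ → Δ₁ + Δ₂ = Δ → HasSplitInterpolant Γ₁ Γ₂ (F ::ₘ Δ₁) Δ₂) :
    Interpolable Γ (F ::ₘ Δ) := by
  intro Γ₁ Γ₂ Δ₁ Δ₂ hΓ hΔ
  obtain ⟨Δ₁', rfl, hΔ'⟩ | ⟨Δ₂', rfl, hΔ'⟩ := multiset_add_eq_cons hΔ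
  · exact h _ _ _ _ hΓ hΔ'
  · exact (h _ _ _ _ ((add_comm _ _).trans hΓ) ((add_comm _ _).trans hΔ')).symm

theorem ax (hP : P.isAtom) : Interpolable (P ::ₘ Γ) (P ::ₘ Δ) := by
  refine of_principal_left fun Γ₁ Γ₂ Δ₁ Δ₂ _ hΔ => ?_
  obtain ⟨Δ₁', rfl, -⟩ | ⟨Δ₂', rfl, -⟩ := multiset_add_eq_cons hΔ
  · exact ⟨.bot, (Derivable.ax hP).weaken_right _, .botL, Finset.empty_subset _⟩
  · refine ⟨P, .ax hP, .ax hP, ?_⟩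
    simp only [langM_add, langM_cons]
    grind

theorem botL : Interpolable (.bot ::ₘ Γ) Δ :=
  of_principal_left fun _ _ _ _ _ _ => ⟨.bot, .botL, .botL, Finset.empty_subset _⟩

theorem topR : Interpolable Γ (.top ::ₘ Δ) :=
  of_principal_right fun _ _ _ _ _ _ =>
    ⟨.bot, Derivable.topR.weaken_right _, .botL, Finset.empty_subset _⟩

theorem andL (h : Interpolable (A ::ₘ B ::ₘ Γ) Δ) : Interpolable (A.and B ::ₘ Γ) Δ := by
  refine of_principal_left ?_
  rintro Γ₁ Γ₂ Δ₁ Δ₂ rfl rfl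
  refine (h (Γ₁ := A ::ₘ B ::ₘ Γ₁) (by simp only [Multiset.cons_add]) rfl).unary_rule
    (fun _ => .andL) ?_
  simp only [langM_add, langM_cons, Fm.lang_and]
  grind

theorem andR (hA : Interpolable Γ (A ::ₘ Δ)) (hB : Interpolable Γ (B ::ₘ Δ)) :
    Interpolable Γ (A.and B ::ₘ Δ) := by
  refine of_principal_right ?_
  rintro Γ₁ Γ₂ Δ₁ Δ₂ rfl rfl
  refine (hA rfl (Multiset.cons_add ..)).binary_rule (hB rfl (Multiset.cons_add ..))
    (fun _ => by simpa only [Multiset.cons_add] using .andR) ?_ ?_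
  all_goals
    simp only [langM_add, langM_cons, Fm.lang_and]
    grind

theorem orL (hA : Interpolable (A ::ₘ Γ) Δ) (hB : Interpolable (B ::ₘ Γ) Δ) :
    Interpolable (A.or B ::ₘ Γ) Δ := by
  refine of_principal_left ?_
  rintro Γ₁ Γ₂ Δ₁ Δ₂ rfl rfl
  refine (hA (Multiset.cons_add ..) rfl).binary_rule (hB (Multiset.cons_add ..) rfl)
    (fun _ => .orL) ?_ ?_
  all_goals
    simp only [langM_add, langM_cons, Fm.lang_or]
    grind

theorem orR (h : Interpolable Γ (A ::ₘ B ::ₘ Δ)) : Interpolable Γ (A.or B ::ₘ Δ) := by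
  refine of_principal_right ?_
  rintro Γ₁ Γ₂ Δ₁ Δ₂ rfl rfl
  refine (h (Δ₁ := A ::ₘ B ::ₘ Δ₁) rfl (by simp only [Multiset.cons_add])).unary_rule
    (fun _ => by simpa only [Multiset.cons_add] using .orR) ?_
  simp only [langM_add, langM_cons, Fm.lang_or]
  grind

theorem impL (hA : Interpolable Γ (A ::ₘ Δ)) (hB : Interpolable (B ::ₘ Γ) Δ) :
    Interpolable (A.imp B ::ₘ Γ) Δ := by
  refine of_principal_left ?_
  rintro Γ₁ Γ₂ Δ₁ Δ₂ rfl rfl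
  refine (hA rfl (Multiset.cons_add ..)).binary_rule (hB (Multiset.cons_add ..) rfl)
    (fun _ => by simpa only [Multiset.cons_add] using .impL) ?_ ?_
  all_goals
    simp only [langM_add, langM_cons, Fm.lang_imp]
    grind

theorem impR (h : Interpolable (A ::ₘ Γ) (B ::ₘ Δ)) : Interpolable Γ (A.imp B ::ₘ Δ) := by
  refine of_principal_right ?_
  rintro Γ₁ Γ₂ Δ₁ Δ₂ rfl rfl
  refine (h (Multiset.cons_add ..) (Multiset.cons_add ..)).unary_rule
    (fun _ => by simpa only [Multiset.cons_add] using .impR) ?_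
  simp only [langM_add, langM_cons, Fm.lang_imp]
  grind

theorem allL (hfree : A.freeFor t (Tm.var x))
    (h : Interpolable (A.subst (Tm.var x) t ::ₘ Fm.all x A ::ₘ Γ) Δ) :
    Interpolable (Fm.all x A ::ₘ Γ) Δ := by
  refine of_principal_left ?_
  rintro Γ₁ Γ₂ Δ₁ Δ₂ rfl rfl
  refine (h (Γ₁ := A.subst (Tm.var x) t ::ₘ Fm.all x A ::ₘ Γ₁)
    (by simp only [Multiset.cons_add]) rfl).instantiation_rule (t := t) (fun _ => .allL hfree) ?_
  have hA := A.lang_subst_subset (Tm.var x) t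
  simp only [langM_add, langM_cons, Fm.lang_all]
  grind

theorem exR (hfree : A.freeFor t (Tm.var x))
    (h : Interpolable Γ (Fm.ex x A ::ₘ A.subst (Tm.var x) t ::ₘ Δ)) :
    Interpolable Γ (Fm.ex x A ::ₘ Δ) := by
  refine of_principal_right ?_
  rintro Γ₁ Γ₂ Δ₁ Δ₂ rfl rfl
  refine (h (Δ₁ := Fm.ex x A ::ₘ A.subst (Tm.var x) t ::ₘ Δ₁) rfl
    (by simp only [Multiset.cons_add])).instantiation_rule (t := t)
    (fun _ => by simpa only [Multiset.cons_add] using .exR hfree) ?_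
  have hA := A.lang_subst_subset (Tm.var x) t
  simp only [langM_add, langM_cons, Fm.lang_ex]
  grind

theorem allR (hfree : A.freeFor (Tm.var y) (Tm.var x))
    (hy : Tm.var y ∉ terM Γ ∪ terM Δ ∪ (Fm.all x A).ter)
    (h : Interpolable Γ (A.subst (Tm.var x) (Tm.var y) ::ₘ Δ)) :
    Interpolable Γ (Fm.all x A ::ₘ Δ) := by
  refine of_principal_right ?_
  rintro Γ₁ Γ₂ Δ₁ Δ₂ rfl rfl
  simp only [terM_add, Finset.notMem_union] at hy
  refine (h rfl (Multiset.cons_add ..)).eigenvariable_rule (y := Tm.var y)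
    (Finset.notMem_union.2 ⟨hy.1.1.2, hy.1.2.2⟩) (fun C hyC => ?_) ?_
  · simp only [Multiset.cons_add]
    refine .allR hfree ?_
    simp only [multiset_add_singleton, terM_cons, Finset.notMem_union]
    tauto
  · have hA := A.lang_subst_subset (Tm.var x) (Tm.var y)
    simp only [langM_add, langM_cons, Fm.lang_all]
    grind

theorem exL (hfree : A.freeFor (Tm.var y) (Tm.var x))
    (hy : Tm.var y ∉ terM Γ ∪ terM Δ ∪ (Fm.ex x A).ter)
    (h : Interpolable (A.subst (Tm.var x) (Tm.var y) ::ₘ Γ) Δ) :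
    Interpolable (Fm.ex x A ::ₘ Γ) Δ := by
  refine of_principal_left ?_
  rintro Γ₁ Γ₂ Δ₁ Δ₂ rfl rfl
  simp only [terM_add, Finset.notMem_union] at hy
  refine (h (Multiset.cons_add ..) rfl).eigenvariable_rule (y := Tm.var y)
    (Finset.notMem_union.2 ⟨hy.1.1.2, hy.1.2.2⟩) (fun C hyC => .exL hfree ?_) ?_
  · simp only [multiset_add_singleton, terM_cons, Finset.notMem_union]
    tauto
  · have hA := A.lang_subst_subset (Tm.var x) (Tm.var y)
    simp only [langM_add, langM_cons, Fm.lang_ex]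
    grind

end Interpolable

theorem DerG.interpolable {n : ℕ} {Γ Δ : Multiset Fm} (d : DerG ∅ n Γ Δ) : Interpolable Γ Δ := by
  induction d with
  | ax hP => exact .ax hP
  | botL => exact .botL
  | topR => exact .topR
  | andL _ ih => exact ih.andL
  | andR _ _ ihA ihB => exact ihA.andR ihB
  | orL _ _ ihA ihB => exact ihA.orL ihB
  | orR _ ih => exact ih.orR
  | impL _ _ ihA ihB => exact ihA.impL ihB
  | impR _ ih => exact ih.impR
  | allL hfree _ ih => exact ih.allL hfree
  | allR hfree hy _ ih => exact ih.allR hfree hy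
  | exL hfree hy _ ih => exact ih.exL hfree hy
  | exR hfree _ ih => exact ih.exR hfree
  | geom hR => exact absurd hR (Set.notMem_empty _)

/-- Maehara's lemma for G: every partition Γ₁;Γ₂⇒Δ₁;Δ₂ of a
derivable sequent has a split-interpolant C: Γ₁⇒Δ₁,C and C,Γ₂⇒Δ₂ are
derivable in G and L(C) ⊆ L(Γ₁,Δ₁) ∩ L(Γ₂,Δ₂). -/
theorem maehara_G (Γ₁ Γ₂ Δ₁ Δ₂ : Multiset Fm)
    (hder : Derivable ∅ (Γ₁ + Γ₂) (Δ₁ + Δ₂)) :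
    ∃ C : Fm, SplitInterpolant ∅ Γ₁ Γ₂ Δ₁ Δ₂ C := by
  obtain ⟨n, d⟩ := hder
  exact d.interpolable rfl rfl
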